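/- arXiv:2308.11445 — 5 statements merged into one kernel-verified Lean document; each statement's English description precedes it below -/
import Mathlib

section
/- Let F(x,y) be the free group on two generators x, y, let γ : F(x,y) → ℤ × ℤ be the homomorphism with γ(x) = (1,0), γ(y) = (0,1), and let B = [x,y⁻¹] = x y⁻¹ x⁻¹ y. Then every element R ∈ F(x,y) with γ(R) = (0,0) can be written as a finite product R = ∏ᵢ (x^{eᵢ} y^{fᵢ} B^{tᵢ} y^{-fᵢ} x^{-eᵢ}) with eᵢ, fᵢ, tᵢ ∈ ℤ; that is, ker γ is the subgroup of F(x,y) generated by the set { x^{e} y^{f} B^{t} y^{-f} x^{-e} | e, f, t ∈ ℤ }. -/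
theorem stmt13_comm {G : Type*} [Group G] (x y : G) (H : Subgroup G)
    (hH : ∀ e f : ℤ, x ^ e * y ^ f * (x * y⁻¹ * x⁻¹ * y) * y ^ (-f) * x ^ (-e) ∈ H) (a b : ℤ) :
    x ^ a * (y ^ b * x * y ^ (-b) * x⁻¹) * x ^ (-a) ∈ H := by
  have key : ∀ b : ℤ, x ^ a * (y ^ (b + 1) * x * y ^ (-(b + 1)) * x⁻¹) * x ^ (-a) =
      (x ^ a * y ^ (b + 1) * (x * y⁻¹ * x⁻¹ * y) * y ^ (-(b + 1)) * x ^ (-a)) *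
      (x ^ a * (y ^ b * x * y ^ (-b) * x⁻¹) * x ^ (-a)) := by
    intro b
    group
  induction b using Int.induction_on with
  | zero => simp
  | succ i ih =>
    rw [key]
    exact H.mul_mem (hH _ _) ih
  | pred i ih =>
    have h := key (-(i : ℤ) - 1)
    rw [sub_add_cancel] at h
    rw [h] at ih
    have h2 := hH a (-(i : ℤ))
    exact (H.mul_mem_cancel_left h2).1 ih

theorem stmt13_form (H : Subgroup (FreeGroup Bool))
    (hH : ∀ a b : ℤ, FreeGroup.of true ^ a * (FreeGroup.of false ^ b * FreeGroup.of true *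
      FreeGroup.of false ^ (-b) * (FreeGroup.of true)⁻¹) * FreeGroup.of true ^ (-a) ∈ H)
    (w : FreeGroup Bool) : ∀ a b : ℤ, ∃ h ∈ H, ∃ c d : ℤ,
      FreeGroup.of true ^ a * FreeGroup.of false ^ b * w =
        h * (FreeGroup.of true ^ c * FreeGroup.of false ^ d) := by
  induction w using FreeGroup.induction_on with
  | C1 => exact fun a b => ⟨1, H.one_mem, a, b, by simp⟩
  | of i =>
    intro a b
    cases i
    · exact ⟨1, H.one_mem, a, b + 1, by group⟩
    · exact ⟨_, hH a b, a + 1, b, by group⟩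
  | inv_of i _ =>
    intro a b
    cases i
    · exact ⟨1, H.one_mem, a, b - 1, by group⟩
    · exact ⟨_, H.inv_mem (hH (a - 1) b), a - 1, b, by group⟩
  | mul u v hu hv =>
    intro a b
    obtain ⟨h, hh, c, d, e⟩ := hu a b
    obtain ⟨h', hh', c', d', e'⟩ := hv c d
    exact ⟨h * h', H.mul_mem hh hh', c', d', by rw [← mul_assoc, e, mul_assoc h, e', mul_assoc]⟩

theorem stmt13_le (γ : FreeGroup Bool →* Multiplicative (ℤ × ℤ)) :
    Subgroup.closure
      {w : FreeGroup Bool | ∃ e f t : ℤ,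
        w = (FreeGroup.of true) ^ e * (FreeGroup.of false) ^ f *
          (FreeGroup.of true * (FreeGroup.of false)⁻¹ * (FreeGroup.of true)⁻¹ *
            FreeGroup.of false) ^ t *
          (FreeGroup.of false) ^ (-f) * (FreeGroup.of true) ^ (-e)} ≤ γ.ker := by
  rw [Subgroup.closure_le]
  rintro w ⟨e, f, t, rfl⟩
  have hB : γ (FreeGroup.of true * (FreeGroup.of false)⁻¹ * (FreeGroup.of true)⁻¹ *
      FreeGroup.of false) = 1 := by
    simp only [map_mul, map_inv]
    rw [mul_right_comm (γ _) _ (γ _)⁻¹]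
    simp
  change γ _ = 1
  rw [map_mul, map_mul, map_mul, map_mul, map_zpow γ (_ * _ * _ * _), hB]
  simp

/-- With `γ : F(x,y) → ℤ × ℤ` the abelianization homomorphism and
`B = [x,y⁻¹]`, the kernel of `γ` is generated by the conjugates `x^e y^f B^t y^(-f) x^(-e)`. -/
theorem stmt13 (γ : FreeGroup Bool →* Multiplicative (ℤ × ℤ))
    (hx : γ (FreeGroup.of true) = Multiplicative.ofAdd (1, 0))
    (hy : γ (FreeGroup.of false) = Multiplicative.ofAdd (0, 1)) :
    γ.ker = Subgroup.closure
      {w : FreeGroup Bool | ∃ e f t : ℤ,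
        w = (FreeGroup.of true) ^ e * (FreeGroup.of false) ^ f *
          (FreeGroup.of true * (FreeGroup.of false)⁻¹ * (FreeGroup.of true)⁻¹ *
            FreeGroup.of false) ^ t *
          (FreeGroup.of false) ^ (-f) * (FreeGroup.of true) ^ (-e)} := by
  apply le_antisymm
  · intro w hw
    set H := Subgroup.closure
      {w : FreeGroup Bool | ∃ e f t : ℤ,
        w = (FreeGroup.of true) ^ e * (FreeGroup.of false) ^ f *
          (FreeGroup.of true * (FreeGroup.of false)⁻¹ * (FreeGroup.of true)⁻¹ *
            FreeGroup.of false) ^ t *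
          (FreeGroup.of false) ^ (-f) * (FreeGroup.of true) ^ (-e)} with hHdef
    have hHker : H ≤ γ.ker := stmt13_le γ
    obtain ⟨h, hh, c, d, e⟩ := stmt13_form H (stmt13_comm _ _ H (fun e f =>
      Subgroup.subset_closure ⟨e, f, 1, by rw [zpow_one]⟩)) w 0 0
    simp only [zpow_zero, one_mul] at e
    have h1 : γ w = 1 := hw
    have h2 : γ h = 1 := hHker hh
    rw [e, map_mul, h2, one_mul, map_mul, map_zpow, map_zpow, hx, hy, ← ofAdd_zsmul,
      ← ofAdd_zsmul, ← ofAdd_add, ofAdd_eq_one] at h1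
    have hc : c = 0 := by simpa using congrArg Prod.fst h1
    have hd : d = 0 := by simpa using congrArg Prod.snd h1
    rw [e, hc, hd]
    simpa using hh
  · exact stmt13_le γ
end

section
/- Let F(x,y) be the free group on x, y, let γ : F(x,y) → ℤ × ℤ be the homomorphism with γ(x) = (1,0), γ(y) = (0,1), and let B = [x,y⁻¹]. Suppose ℰ : ker γ → ℤ is a group homomorphism such that ℰ(w B w⁻¹) = 1 for every w ∈ F(x,y). Then for every n ∈ ℤ the element (B x⁻¹)ⁿ xⁿ lies in ker γ and ℰ((B x⁻¹)ⁿ xⁿ) = n. -/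
/-- If `ℰ : ker γ → ℤ` is a homomorphism sending every conjugate `w B w⁻¹`
of `B = [x,y⁻¹]` to `1`, then `ℰ((B x⁻¹)ⁿ xⁿ) = n` for every integer `n`. -/
theorem stmt15 (γ : FreeGroup Bool →* Multiplicative (ℤ × ℤ))
    (hx : γ (FreeGroup.of true) = Multiplicative.ofAdd (1, 0))
    (hy : γ (FreeGroup.of false) = Multiplicative.ofAdd (0, 1))
    (ℰ : γ.ker →* Multiplicative ℤ)
    (hℰ : ∀ (w : FreeGroup Bool)
      (h : w * (FreeGroup.of true * (FreeGroup.of false)⁻¹ * (FreeGroup.of true)⁻¹ *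
          FreeGroup.of false) * w⁻¹ ∈ γ.ker),
      ℰ ⟨_, h⟩ = Multiplicative.ofAdd (1 : ℤ)) :
    ∀ n : ℤ, ∃ h : ((FreeGroup.of true * (FreeGroup.of false)⁻¹ * (FreeGroup.of true)⁻¹ *
        FreeGroup.of false) * (FreeGroup.of true)⁻¹) ^ n * (FreeGroup.of true) ^ n ∈ γ.ker,
      ℰ ⟨_, h⟩ = Multiplicative.ofAdd n := by
  have hB : γ (FreeGroup.of true * (FreeGroup.of false)⁻¹ * (FreeGroup.of true)⁻¹ *
      FreeGroup.of false) = 1 := by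
    simp only [map_mul, map_inv]
    rw [mul_right_comm (γ (FreeGroup.of true))]
    simp
  generalize (FreeGroup.of true * (FreeGroup.of false)⁻¹ * (FreeGroup.of true)⁻¹ *
      FreeGroup.of false) = B at *
  generalize FreeGroup.of true = x at *
  have hmem : ∀ n : ℤ, (B * x⁻¹) ^ n * x ^ n ∈ γ.ker := by
    intro n
    simp [MonoidHom.mem_ker, hB]
  have hc : ∀ w, w * B * w⁻¹ ∈ γ.ker := by
    intro w
    simp [MonoidHom.mem_ker, hB]
  have step : ∀ n : ℤ, ℰ ⟨_, hmem (n + 1)⟩ = ℰ ⟨_, hmem n⟩ * Multiplicative.ofAdd (1 : ℤ) := by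
    intro n
    rw [← hℰ (x ^ (-n)) (hc _), ← map_mul]
    congr 1
    apply Subtype.ext
    simp only [Subgroup.coe_mul]
    rw [zpow_add_one, add_comm n 1, zpow_one_add x]
    group
  intro n
  refine ⟨hmem n, ?_⟩
  induction n using Int.induction_on with
  | zero =>
    rw [ofAdd_zero, ← map_one ℰ]
    congr 1
  | succ i ih => rw [step, ih, ← ofAdd_add]
  | pred i ih =>
    have h := step (-(i : ℤ) - 1)
    simp only [sub_add_cancel] at h
    rw [ih] at h
    rw [ofAdd_sub, h, mul_div_cancel_right]
end

section
/- Let T³ = (ℝ/ℤ)³, let pr₃ : T³ → ℝ/ℤ be the third projection, and let τ₁ : T³ → T³ be the free involution τ₁(x,y,z) = (x + 1/2, y, z). Then for every continuous map f : T³ → T³ with pr₃∘f = pr₃, there exist a continuous map g : T³ → T³ with pr₃∘g = pr₃ and a continuous homotopy H : T³ × [0,1] → T³ with H(·,0) = f, H(·,1) = g and pr₃(H(w,t)) = pr₃(w) for all w,t, such that g(τ₁(w)) ≠ g(w) for all w ∈ T³. In other words, no homotopy class over S¹ = ℝ/ℤ of fiber-preserving self-maps of the trivial 2-torus bundle pr₃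 : T³ → S¹ has the Borsuk–Ulam property with respect to τ₁. -/
open unitInterval

/-- The 3-torus `(ℝ/ℤ)³`. -/
abbrev Torus3 : Type := UnitAddCircle × UnitAddCircle × UnitAddCircle

/-- The free involution `τ₁`. -/
noncomputable def tauOne (w : Torus3) : Torus3 :=
  (w.1 + ((1 / 2 : ℝ) : UnitAddCircle), w.2.1, w.2.2)

lemma tauOne_tauOne (w : Torus3) : tauOne (tauOne w) = w := by
  have h : ((1 / 2 : ℝ) : UnitAddCircle) + ((1 / 2 : ℝ) : UnitAddCircle) = 0 := by
    rw [← AddCircle.coe_add, AddCircle.coe_eq_zero_iff]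
    exact ⟨1, by norm_num⟩
  simp only [tauOne, add_assoc, h, add_zero]

lemma continuous_tauOne : Continuous tauOne := by
  unfold tauOne; fun_prop

/-- The difference `f ∘ τ₁ - f` lifts to the real line, by homotopy lifting. -/
lemma exists_real_lift (f : Torus3 → UnitAddCircle) (hf : Continuous f) :
    ∃ h : Torus3 → ℝ, Continuous h ∧ ∀ w, ((h w : ℝ) : UnitAddCircle) = f (tauOne w) - f w := by
  have cov : IsCoveringMap ((↑) : ℝ → UnitAddCircle) := AddCircle.isCoveringMap_coe 1
  have hc : Continuous ((↑) : ℝ → UnitAddCircle) := AddCircle.continuous_mk' 1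
  let F : C(I × Torus3, UnitAddCircle) :=
    ⟨fun p => f (p.2.1 + (((p.1 : ℝ) / 2 : ℝ) : UnitAddCircle), p.2.2.1, p.2.2.2) - f p.2, by
      fun_prop⟩
  have F0 : ∀ w, F (0, w) = (((ContinuousMap.const Torus3 (0 : ℝ)) w : ℝ) : UnitAddCircle) := by
    intro w
    simp [F]
  refine ⟨fun w => cov.liftHomotopy F (.const _ 0) F0 (1, w), by fun_prop, fun w => ?_⟩
  have := congr_fun (cov.liftHomotopy_lifts F (.const _ 0) F0) (1, w)
  rw [Function.comp_apply] at this
  rw [this]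
  simp [F, tauOne]

/-- A real perturbation of one coordinate whose coincidences lie on the zero set of `c`. -/
lemma exists_perturbation (f : Torus3 → UnitAddCircle) (hf : Continuous f)
    (c : Torus3 → ℝ) (hc : Continuous c) (hodd : ∀ w, c (tauOne w) = -c w) (hb : ∀ w, |c w| ≤ 1) :
    ∃ u : Torus3 → ℝ, Continuous u ∧
      ∀ w, f (tauOne w) + ((u (tauOne w) : ℝ) : UnitAddCircle) = f w + ((u w : ℝ) : UnitAddCircle) →
        c w = 0 := by
  obtain ⟨h, hh, hl⟩ := exists_real_lift f hf
  have ht := continuous_tauOne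
  refine ⟨fun w => (h w - h (tauOne w)) / 4 + c w / 8, by fun_prop, fun w hw => ?_⟩
  have h1 : ((h w + h (tauOne w) : ℝ) : UnitAddCircle) = 0 := by
    rw [AddCircle.coe_add, hl, hl, tauOne_tauOne]; abel
  have h2 : (((h w + h (tauOne w)) / 2 - c w / 4 : ℝ) : UnitAddCircle) = 0 := by
    have e : (h w + h (tauOne w)) / 2 - c w / 4 =
        h w + (((h (tauOne w) - h (tauOne (tauOne w))) / 4 + c (tauOne w) / 8)
          - ((h w - h (tauOne w)) / 4 + c w / 8)) := by
      rw [tauOne_tauOne, hodd]; ring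
    rw [e, AddCircle.coe_add, AddCircle.coe_sub, hl]
    rw [← sub_eq_zero] at hw
    rw [← hw]; abel
  obtain ⟨m, hm⟩ := (AddCircle.coe_eq_zero_iff _).1 h1
  obtain ⟨n, hn⟩ := (AddCircle.coe_eq_zero_iff _).1 h2
  rw [zsmul_one] at hm hn
  have hcw : c w = ((2 * m - 4 * n : ℤ) : ℝ) := by push_cast; linarith
  have hbw := hb w
  rw [hcw] at hbw ⊢
  have h3 : |2 * m - 4 * n| ≤ 1 := by exact_mod_cast hbw
  rw [abs_le] at h3
  have : 2 * m - 4 * n = 0 := by omega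
  rw [this]; simp

lemma toCircle_tauOne (w : Torus3) :
    ((AddCircle.toCircle (tauOne w).1 : Circle) : ℂ) = -((AddCircle.toCircle w.1 : Circle) : ℂ) := by
  have h : ((AddCircle.toCircle ((1 / 2 : ℝ) : UnitAddCircle) : Circle) : ℂ) = -1 := by
    rw [AddCircle.toCircle_apply_mk, Circle.coe_exp, ← Complex.exp_pi_mul_I]
    congr 1; push_cast; ring
  simp only [tauOne]
  rw [AddCircle.toCircle_add, Circle.coe_mul, h]; ring

/-- No homotopy class over `S¹` of fiber-preserving self-maps of the trivial
2-torus bundle `pr₃ : T³ → S¹` has the Borsuk–Ulam property with respect to the free involution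
`τ₁(x,y,z) = (x + 1/2, y, z)`: every fiber-preserving map is homotopic over `S¹` to a
coincidence-free one. -/
theorem stmt16 :
    ∀ f : Torus3 → Torus3, Continuous f → (∀ w, (f w).2.2 = w.2.2) →
      ∃ (g : Torus3 → Torus3) (H : Torus3 × I → Torus3),
        Continuous g ∧ (∀ w, (g w).2.2 = w.2.2) ∧
        Continuous H ∧ (∀ w, H (w, 0) = f w) ∧ (∀ w, H (w, 1) = g w) ∧
        (∀ w t, (H (w, t)).2.2 = w.2.2) ∧
        ∀ w : Torus3,
          g (w.1 + ((1 / 2 : ℝ) : UnitAddCircle), w.2.1, w.2.2) ≠ g w := by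
  intro f hf hpr
  have ht : Continuous fun w : Torus3 => ((AddCircle.toCircle w.1 : Circle) : ℂ) :=
    continuous_subtype_val.comp (AddCircle.continuous_toCircle.comp continuous_fst)
  have hc : Continuous ((↑) : ℝ → UnitAddCircle) := AddCircle.continuous_mk' 1
  obtain ⟨u, hu, hu'⟩ := exists_perturbation (fun w => (f w).1) (by fun_prop)
    (fun w => ((AddCircle.toCircle w.1 : Circle) : ℂ).re) (Complex.continuous_re.comp ht)
    (fun w => by simp only [toCircle_tauOne, Complex.neg_re])
    (fun w => (Complex.abs_re_le_norm _).trans (Circle.norm_coe _).le)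
  obtain ⟨v, hv, hv'⟩ := exists_perturbation (fun w => (f w).2.1) (by fun_prop)
    (fun w => ((AddCircle.toCircle w.1 : Circle) : ℂ).im) (Complex.continuous_im.comp ht)
    (fun w => by simp only [toCircle_tauOne, Complex.neg_im])
    (fun w => (Complex.abs_im_le_norm _).trans (Circle.norm_coe _).le)
  refine ⟨fun w => ((f w).1 + ((u w : ℝ) : UnitAddCircle), (f w).2.1 + ((v w : ℝ) : UnitAddCircle),
      (f w).2.2),
    fun p => ((f p.1).1 + (((p.2 : ℝ) * u p.1 : ℝ) : UnitAddCircle),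
      (f p.1).2.1 + (((p.2 : ℝ) * v p.1 : ℝ) : UnitAddCircle), (f p.1).2.2),
    by fun_prop, hpr, by fun_prop, fun w => by simp, fun w => by simp, fun w t => hpr w, ?_⟩
  intro w hw
  have h1 := hu' w (congrArg Prod.fst hw)
  have h2 := hv' w (congrArg (fun p : Torus3 => p.2.1) hw)
  exact Circle.coe_ne_zero _ (Complex.ext h1 h2)
end

section
/- Let T² = (ℝ/ℤ)², T³ = (ℝ/ℤ)³ with third projection pr₃. For j ∈ {1,2}, let τ_j : T³ → T³ be the free involutions τ₁(x,y,z) = (x + 1/2, y, z) and τ₂(x,y,z) = (x + 1/2, 1/2 − y, z), and let τ̄_j : T² → T² be the free involutions τ̄₁(x,y) = (x + 1/2, y) and τ̄₂(x,y) = (x + 1/2, 1/2 − y). Let f : T³ → T³ be continuous with pr₃∘f = pr₃, and define f̄ : T² → T² by f̄(x,y) = (f₁(x,y,0), f₂(x,y,0)), where f(x,y,0) = (f₁(x,y,0), f₂(x,y,0), 0). Then the homotopy class of f over S¹ = ℝ/ℤ has the Borsuk–Ulam property with respect to τ_j (every g homotopic to f through maps over S¹ satisfies g(τ_j(w)) =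 g(w) for some w ∈ T³) if and only if the free homotopy class of f̄ has the Borsuk–Ulam property with respect to τ̄_j (every continuous h : T² → T² homotopic to f̄ satisfies h(τ̄_j(u)) = h(u) for some u ∈ T²). -/
open unitInterval

/-- The 2-torus `(ℝ/ℤ)²`. -/
abbrev Torus2 : Type := UnitAddCircle × UnitAddCircle

/-- A circle-valued map on `T² × S¹` is its restriction to `T² × {0}`, plus an integer multiple
of the last coordinate, plus a map that lifts to `ℝ`. -/
theorem circle_decomp (F : Torus2 × UnitAddCircle → UnitAddCircle) (hF : Continuous F) :
    ∃ (c : ℤ) (E : Torus2 × UnitAddCircle → ℝ), Continuous E ∧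
      ∀ u z, F (u, z) = F (u, 0) + c • z + ((E (u, z) : ℝ) : UnitAddCircle) := by
  have cov : IsCoveringMap ((↑) : ℝ → UnitAddCircle) := AddCircle.isCoveringMap_coe 1
  let D : C(I × Torus2, UnitAddCircle) :=
    ⟨fun p => F (p.2, ((p.1 : ℝ) : UnitAddCircle)) - F (p.2, 0), by
      have : Continuous fun p : I × Torus2 => ((p.1 : ℝ) : UnitAddCircle) :=
        cov.continuous.comp (by fun_prop)
      fun_prop⟩
  have D0 : ∀ a : Torus2, D (0, a) = (((ContinuousMap.const Torus2 (0 : ℝ)) a : ℝ) : UnitAddCircle) := by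
    intro a; simp [D]
  let L := cov.liftHomotopy D (ContinuousMap.const Torus2 (0 : ℝ)) D0
  have hL : ∀ t u, ((L (t, u) : ℝ) : UnitAddCircle)
      = F (u, ((t : ℝ) : UnitAddCircle)) - F (u, 0) := fun t u =>
    congr_fun (cov.liftHomotopy_lifts D _ D0) (t, u)
  have hL0 : ∀ u, L (0, u) = 0 := fun u => cov.liftHomotopy_zero D _ D0 u
  have h1 : ∀ u, ((L (1, u) : ℝ) : UnitAddCircle) = 0 := by
    intro u
    rw [hL]
    have : (((1 : I) : ℝ) : UnitAddCircle) = 0 := by simp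
    rw [this, sub_self]
  have hconst : ∀ u, L (1, u) = L (1, 0) := fun u =>
    cov.const_of_comp (g := fun u => L (1, u)) (by fun_prop)
      (fun a a' => by rw [h1, h1]) u 0
  obtain ⟨c, hc⟩ := (AddCircle.coe_eq_zero_iff (1 : ℝ)).1 (h1 0)
  have hc' : ∀ u, L (1, u) = c := fun u => by rw [hconst, ← hc]; simp
  let P : ℝ → C(Torus2, ℝ) := fun t =>
    L.curry (Set.projIcc 0 1 zero_le_one t) - ContinuousMap.const Torus2 (c * t)
  have hP : Continuous P := by
    have h2 : Continuous fun t : ℝ => ContinuousMap.const Torus2 ((c : ℝ) * t) :=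
      ContinuousMap.continuous_const'.comp (by fun_prop)
    exact (L.curry.continuous.comp continuous_projIcc).sub h2
  have hP01 : P 0 = P 1 := by
    ext u
    simp [P, hL0, hc']
  let Q : UnitAddCircle → C(Torus2, ℝ) := AddCircle.liftIco 1 0 P
  have hQ : Continuous Q := AddCircle.liftIco_zero_continuous hP01 hP.continuousOn
  refine ⟨c, fun p => Q p.2 p.1, ?_, ?_⟩
  · fun_prop
  · intro u z
    obtain ⟨t, ht, rfl⟩ : ∃ t : ℝ, t ∈ Set.Ico (0 : ℝ) 1 ∧ ((t : ℝ) : UnitAddCircle) = z := by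
      refine ⟨AddCircle.equivIco 1 0 z, ?_, AddCircle.coe_equivIco⟩
      simpa using (AddCircle.equivIco (1 : ℝ) 0 z).2
    have e1 : Q ((t : ℝ) : UnitAddCircle) = P t := AddCircle.liftIco_zero_coe_apply ht
    have htI : t ∈ Set.Icc (0 : ℝ) 1 := ⟨ht.1, ht.2.le⟩
    have e2 : P t u = L (⟨t, htI⟩, u) - c * t := by
      simp [P, Set.projIcc_of_mem zero_le_one htI]
    simp only [e1, e2]
    have e3 : ((((c : ℝ) * t : ℝ)) : UnitAddCircle) = c • ((t : ℝ) : UnitAddCircle) := by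
      rw [← AddCircle.coe_zsmul, zsmul_eq_mul]
    rw [AddCircle.coe_sub, hL, e3]
    abel

/-- The statement for an arbitrary self-map `τ` of the fiber. -/
theorem bu_iff (f : Torus3 → Torus3) (hfc : Continuous f) (hfib : ∀ w, (f w).2.2 = w.2.2)
    (τ : Torus2 → Torus2) :
    (∀ g : Torus3 → Torus3, Continuous g →
      (∃ H : Torus3 × I → Torus3, Continuous H ∧ (∀ w, H (w, 0) = f w) ∧
        (∀ w, H (w, 1) = g w) ∧ ∀ w t, (H (w, t)).2.2 = w.2.2) →
      ∃ w : Torus3, g ((τ (w.1, w.2.1)).1, (τ (w.1, w.2.1)).2, w.2.2) = g w) ↔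
    (∀ h : Torus2 → Torus2, Continuous h →
      (∃ K : Torus2 × I → Torus2, Continuous K ∧
        (∀ u : Torus2, K (u, 0) =
          ((f (u.1, u.2, 0)).1, (f (u.1, u.2, 0)).2.1)) ∧
        ∀ u, K (u, 1) = h u) →
      ∃ u : Torus2, h (τ u) = h u) := by
  constructor
  · rintro hg h hh ⟨K, hK, K0, K1⟩
    obtain ⟨c, E, hE, hcE⟩ := circle_decomp (fun p => (f (p.1.1, p.1.2, p.2)).1) (by fun_prop)
    obtain ⟨d, G, hG, hdG⟩ := circle_decomp (fun p => (f (p.1.1, p.1.2, p.2)).2.1) (by fun_prop)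
    have hcoe : Continuous ((↑) : ℝ → UnitAddCircle) := (AddCircle.isCoveringMap_coe 1).continuous
    have key := hg
      (fun w => ((h (w.1, w.2.1)).1 + c • w.2.2, (h (w.1, w.2.1)).2 + d • w.2.2, w.2.2))
      (by fun_prop)
      ⟨fun p => ((K ((p.1.1, p.1.2.1), p.2)).1 + c • p.1.2.2
          + (((1 - (p.2 : ℝ)) * E ((p.1.1, p.1.2.1), p.1.2.2) : ℝ) : UnitAddCircle),
        (K ((p.1.1, p.1.2.1), p.2)).2 + d • p.1.2.2
          + (((1 - (p.2 : ℝ)) * G ((p.1.1, p.1.2.1), p.1.2.2) : ℝ) : UnitAddCircle),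
        p.1.2.2), by
          have a1 : Continuous fun p : Torus3 × I =>
            (((1 - (p.2 : ℝ)) * E ((p.1.1, p.1.2.1), p.1.2.2) : ℝ) : UnitAddCircle) :=
            hcoe.comp (by fun_prop)
          have a2 : Continuous fun p : Torus3 × I =>
            (((1 - (p.2 : ℝ)) * G ((p.1.1, p.1.2.1), p.1.2.2) : ℝ) : UnitAddCircle) :=
            hcoe.comp (by fun_prop)
          fun_prop, (by
          rintro ⟨x, y, z⟩
          have b1 := hcE (x, y) z
          have b2 := hdG (x, y) z
          have b3 := hfib (x, y, z)
          simp only at b1 b2 b3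
          refine Prod.ext ?_ (Prod.ext ?_ ?_)
          · simp [K0, b1]
          · simp [K0, b2]
          · exact b3.symm), by
            rintro ⟨x, y, z⟩
            simp [K1], fun _ _ => rfl⟩
    obtain ⟨w, hw⟩ := key
    · refine ⟨(w.1, w.2.1), ?_⟩
      simp only [Prod.mk.injEq, add_left_inj] at hw
      exact Prod.ext hw.1 hw.2.1
  · rintro hh g hg ⟨H, hH, H0, H1, H2⟩
    obtain ⟨u, hu⟩ := hh (fun u => ((g (u.1, u.2, 0)).1, (g (u.1, u.2, 0)).2.1)) (by fun_prop)
      ⟨fun p => ((H ((p.1.1, p.1.2, 0), p.2)).1, (H ((p.1.1, p.1.2, 0), p.2)).2.1),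
        by fun_prop, fun u => by simp [H0], fun u => by simp [H1]⟩
    have g3 : ∀ w, (g w).2.2 = w.2.2 := fun w => by rw [← H1, H2]
    simp only [Prod.mk.injEq] at hu
    refine ⟨(u.1, u.2, 0), ?_⟩
    refine Prod.ext hu.1 (Prod.ext hu.2 ?_)
    rw [g3, g3]

/-- For a fiber-preserving self-map `f` of the trivial 2-torus bundle
`T³ → S¹`, and for each of the free involutions `τ₁(x,y,z) = (x+1/2, y, z)` and
`τ₂(x,y,z) = (x+1/2, 1/2-y, z)` (with restrictions `τ̄₁(x,y) = (x+1/2,y)` and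
`τ̄₂(x,y) = (x+1/2, 1/2-y)` to the fiber `T²`), the homotopy class of `f` over `S¹` has the
Borsuk–Ulam property with respect to `τ_j` iff the free homotopy class of the restriction
`f̄` of `f` to the fiber has the Borsuk–Ulam property with respect to `τ̄_j`. -/
theorem stmt18 (f : Torus3 → Torus3) (hfc : Continuous f) (hfib : ∀ w, (f w).2.2 = w.2.2) :
    ((∀ g : Torus3 → Torus3, Continuous g →
      (∃ H : Torus3 × I → Torus3, Continuous H ∧ (∀ w, H (w, 0) = f w) ∧
        (∀ w, H (w, 1) = g w) ∧ ∀ w t, (H (w, t)).2.2 = w.2.2) →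
      ∃ w : Torus3, g (w.1 + ((1 / 2 : ℝ) : UnitAddCircle), w.2.1, w.2.2) = g w) ↔
    (∀ h : Torus2 → Torus2, Continuous h →
      (∃ K : Torus2 × I → Torus2, Continuous K ∧
        (∀ u : Torus2, K (u, 0) =
          ((f (u.1, u.2, 0)).1, (f (u.1, u.2, 0)).2.1)) ∧
        ∀ u, K (u, 1) = h u) →
      ∃ u : Torus2, h (u.1 + ((1 / 2 : ℝ) : UnitAddCircle), u.2) = h u)) ∧
    ((∀ g : Torus3 → Torus3, Continuous g →
      (∃ H : Torus3 × I → Torus3, Continuous H ∧ (∀ w, H (w, 0) = f w) ∧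
        (∀ w, H (w, 1) = g w) ∧ ∀ w t, (H (w, t)).2.2 = w.2.2) →
      ∃ w : Torus3,
        g (w.1 + ((1 / 2 : ℝ) : UnitAddCircle),
          ((1 / 2 : ℝ) : UnitAddCircle) - w.2.1, w.2.2) = g w) ↔
    (∀ h : Torus2 → Torus2, Continuous h →
      (∃ K : Torus2 × I → Torus2, Continuous K ∧
        (∀ u : Torus2, K (u, 0) =
          ((f (u.1, u.2, 0)).1, (f (u.1, u.2, 0)).2.1)) ∧
        ∀ u, K (u, 1) = h u) →
      ∃ u : Torus2,
        h (u.1 + ((1 / 2 : ℝ) : UnitAddCircle),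
          ((1 / 2 : ℝ) : UnitAddCircle) - u.2) = h u)) := by
  exact ⟨bu_iff f hfc hfib fun u => (u.1 + ((1 / 2 : ℝ) : UnitAddCircle), u.2),
    bu_iff f hfc hfib fun u => (u.1 + ((1 / 2 : ℝ) : UnitAddCircle),
      ((1 / 2 : ℝ) : UnitAddCircle) - u.2)⟩
end

section
/- Let T² = (ℝ/ℤ)², and let MA be the quotient of T² × [0,1] by the identification ((x,y),0) ∼ ((x+y,y),1), the 2-torus bundle over S¹ = ℝ/ℤ with monodromy matrix A = [[1,1],[0,1]], with projection p : MA → S¹, p[((x,y),t)] = [t]. Let τ : MA → MA be the free involution over S¹ given by τ[((x,y),t)] = [((x + 1/2, y), t)]. For integers r, s, u, v, let f_{r,s,u,v} : MA → MA be the (well-defined) continuous map over S¹ given by f_{r,s,u,v}[((x,y),t)] = [((r·x + s·y + u·t, r·y + v·t), t)]. Then the homotopy class of f_{r,s,u,v} over S¹ has the Borsuk–Ulam property with respect to τ (every g homotopic to f_{r,s,u,v} through maps over S¹ satisfies g(τ(w)) = g(w) for some w ∈ MA) if and only if r is even. -/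
open unitInterval

/-- The gluing relation of the mapping torus of the torus homeomorphism
`A(x,y) = (x + y, y)`, i.e. `((x,y),0) ∼ ((x+y,y),1)`. -/
def maRel : (Torus2 × unitInterval) → (Torus2 × unitInterval) → Prop :=
  fun a b => a.2 = 0 ∧ b.2 = 1 ∧ b.1 = (a.1.1 + a.1.2, a.1.2)

/-- The torus bundle `MA` over `S¹` with monodromy matrix `[[1,1],[0,1]]`. -/
abbrev MABundle : Type := Quot maRel

/-- A continuous real function with constant class modulo `T` is constant. -/
lemma const_of_coe_const (T : ℝ) {X : Type*} [TopologicalSpace X] [PreconnectedSpace X]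
    (φ : X → ℝ) (hφ : Continuous φ) (c : AddCircle T) (h : ∀ x, ((φ x : ℝ) : AddCircle T) = c)
    (x y : X) : φ x = φ y := by
  have cov := AddCircle.isCoveringMap_coe (p := T)
  exact cov.isSeparatedMap.const_of_comp cov.isLocalHomeomorph.isLocallyInjective hφ
    (fun a b => (h a).trans (h b).symm) x y

/-- Any angle function on `ℝ × ℝ × I` lifts. -/
lemma exists_angle_lift (T : ℝ) (θ : ℝ × ℝ × I → AddCircle T) (hθ : Continuous θ) :
    ∃ L : ℝ × ℝ × I → ℝ, Continuous L ∧ ∀ x, ((L x : ℝ) : AddCircle T) = θ x := by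
  have cov := AddCircle.isCoveringMap_coe (p := T)
  obtain ⟨l0, hl0⟩ := QuotientAddGroup.mk_surjective (θ (0, 0, 0))
  let h : C(I × (ℝ × ℝ × I), AddCircle T) :=
    ⟨fun z => θ ((z.1 : ℝ) * z.2.1, (z.1 : ℝ) * z.2.2.1, z.1 * z.2.2.2), by fun_prop⟩
  have h0 : ∀ a, h (0, a) = ((ContinuousMap.const _ l0 : C(ℝ × ℝ × I, ℝ)) a : AddCircle T) := by
    intro a
    simp only [h, ContinuousMap.coe_mk, ContinuousMap.const_apply, Set.Icc.coe_zero, zero_mul]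
    exact hl0.symm
  let L := cov.liftHomotopy h (ContinuousMap.const _ l0) h0
  refine ⟨fun x => L (1, x), by fun_prop, fun x => ?_⟩
  have := congr_fun (cov.liftHomotopy_lifts h (ContinuousMap.const _ l0) h0) (1, x)
  refine this.trans ?_
  simp [h]

/-- The topological core: an odd family with twisted gluing vanishes somewhere. -/
lemma odd_family_vanishes (F1 F2 : Torus2 × I → ℝ) (h1 : Continuous F1) (h2 : Continuous F2)
    (o1 : ∀ (a : Torus2) (t : I), F1 ((a.1 + ((1 / 2 : ℝ) : UnitAddCircle), a.2), t) = - F1 (a, t))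
    (o2 : ∀ (a : Torus2) (t : I), F2 ((a.1 + ((1 / 2 : ℝ) : UnitAddCircle), a.2), t) = - F2 (a, t))
    (g1 : ∀ a : Torus2, F1 ((a.1 + a.2, a.2), 1) = F1 (a, 0) + F2 (a, 0))
    (g2 : ∀ a : Torus2, F2 ((a.1 + a.2, a.2), 1) = F2 (a, 0)) :
    ∃ w, F1 w = 0 ∧ F2 w = 0 := by
  by_contra! hne
  let Z : Torus2 × I → ℂ := fun w => ⟨F1 w - (w.2 : ℝ) * F2 w, F2 w⟩
  have hZc : Continuous Z := by
    have : Z = fun w => ((F1 w - (w.2 : ℝ) * F2 w : ℝ) : ℂ) + (F2 w : ℂ) * Complex.I := by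
      funext w; exact Complex.mk_eq_add_mul_I _ _
    rw [this]; fun_prop
  have hZ0 : ∀ w, Z w ≠ 0 := by
    intro w hw
    have e2 : F2 w = 0 := congrArg Complex.im hw
    have e1 : F1 w - (w.2 : ℝ) * F2 w = 0 := congrArg Complex.re hw
    exact hne w (by simpa [e2] using e1) e2
  have hZodd : ∀ (a : Torus2) (t : I),
      Z ((a.1 + ((1 / 2 : ℝ) : UnitAddCircle), a.2), t) = - Z (a, t) := by
    intro a t
    apply Complex.ext
    · simp only [Z, o1, o2, Complex.neg_re]; ring
    · simp only [Z, o2, Complex.neg_im]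
  have hZglue : ∀ a : Torus2, Z ((a.1 + a.2, a.2), 1) = Z (a, 0) := by
    intro a
    apply Complex.ext
    · simp only [Z, g1, g2, Set.Icc.coe_one, Set.Icc.coe_zero]; ring
    · simp only [Z, g2]
  let θ : Torus2 × I → Real.Angle := fun w => ((Complex.arg (Z w) : ℝ) : Real.Angle)
  have hθ : Continuous θ := continuous_iff_continuousAt.2 fun w =>
    (Complex.continuousAt_arg_coe_angle (hZ0 w)).comp hZc.continuousAt
  let c : ℝ × ℝ × I → Torus2 × I := fun x => (((x.1 : UnitAddCircle), (x.2.1 : UnitAddCircle)), x.2.2)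
  have hc : Continuous c := by
    have := AddCircle.continuous_mk' (1 : ℝ)
    exact ((this.comp continuous_fst).prodMk (this.comp (continuous_fst.comp continuous_snd))).prodMk
      (continuous_snd.comp continuous_snd)
  obtain ⟨L, hL, hLθ⟩ := exists_angle_lift (2 * Real.pi) (fun x => θ (c x)) (hθ.comp hc)
  have hLθ' : ∀ x, ((L x : ℝ) : Real.Angle) = θ (c x) := hLθ
  have hA : ∀ x : ℝ × ℝ × I,
      ((L (x.1 + 1 / 2, x.2) - L x : ℝ) : Real.Angle) = (Real.pi : Real.Angle) := by
    intro x
    rw [Real.Angle.coe_sub, hLθ', hLθ']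
    have : Z (c (x.1 + 1 / 2, x.2)) = - Z (c x) := by
      rw [← hZodd]; simp only [c, AddCircle.coe_add]
    simp only [θ]
    rw [this, Complex.arg_neg_coe_angle (hZ0 _)]; abel
  have hAc := const_of_coe_const (2 * Real.pi)
    (fun x : ℝ × ℝ × I => L (x.1 + 1 / 2, x.2) - L x) (by fun_prop) _ hA
  have hB : ∀ x : ℝ × ℝ × I, ((L (x.1, x.2.1 + 1, x.2.2) - L x : ℝ) : Real.Angle) = 0 := by
    intro x
    rw [Real.Angle.coe_sub, hLθ', hLθ']
    have : c (x.1, x.2.1 + 1, x.2.2) = c x := by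
      have h := AddCircle.coe_period (1 : ℝ)
      simp only [c, AddCircle.coe_add, h, add_zero]
    rw [this, sub_self]
  have hBc := const_of_coe_const (2 * Real.pi)
    (fun x : ℝ × ℝ × I => L (x.1, x.2.1 + 1, x.2.2) - L x) (by fun_prop) _ hB
  have hC : ∀ x : ℝ × ℝ, ((L (x.1 + x.2, x.2, 1) - L (x.1, x.2, 0) : ℝ) : Real.Angle) = 0 := by
    intro x
    rw [Real.Angle.coe_sub, hLθ', hLθ']
    have : Z (c (x.1 + x.2, x.2, 1)) = Z (c (x.1, x.2, 0)) := by
      simp only [c, AddCircle.coe_add]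
      exact hZglue ((x.1 : UnitAddCircle), (x.2 : UnitAddCircle))
    simp only [θ]
    rw [this, sub_self]
  have hCc := const_of_coe_const (2 * Real.pi)
    (fun x : ℝ × ℝ => L (x.1 + x.2, x.2, 1) - L (x.1, x.2, 0)) (by fun_prop) _ hC
  have a1 := hAc (0, 1, 1) (0, 0, 0)
  have a2 := hAc (1 / 2, 1, 1) (0, 0, 0)
  have b1 := hBc (0, 0, 1) (0, 0, 0)
  have c1 := hCc (0, 1) (0, 0)
  have hk := hA (0, 0, 0)
  norm_num at a1 a2 b1 c1 hk
  have : L (1 / 2, 0, 0) - L (0, 0, 0) = 0 := by norm_num; linarith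
  norm_num at this
  rw [← Real.Angle.coe_sub, this] at hk
  exact Real.Angle.pi_ne_zero hk.symm

noncomputable section

/-- Abbreviation for the circle character. -/
def circ (x : UnitAddCircle) : ℂ := (AddCircle.toCircle x : ℂ)

lemma circ_cont : Continuous circ :=
  continuous_subtype_val.comp AddCircle.continuous_toCircle

lemma circ_inj : Function.Injective circ :=
  Subtype.val_injective.comp (AddCircle.injective_toCircle one_ne_zero)

/-- Separating functions before gluing. -/
def sepPre (z : Torus2 × I) : ℂ × ℂ × ℂ :=
  (circ z.1.2, ((z.2 : ℝ) : ℂ) * (1 - ((z.2 : ℝ) : ℂ)) * circ z.1.1,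
    (1 - ((z.2 : ℝ) : ℂ)) * circ (z.1.1 + z.1.2) + ((z.2 : ℝ) : ℂ) * circ z.1.1)

lemma sepPre_cont : Continuous sepPre := by
  have := circ_cont
  unfold sepPre
  fun_prop

/-- Separating functions on the bundle. -/
def sepMap : MABundle → ℂ × ℂ × ℂ := Quot.lift sepPre (by
  rintro ⟨a, t⟩ ⟨b, t'⟩ ⟨h0, h1, h2⟩
  simp only at h0 h1 h2
  subst h0 h1 h2
  simp [sepPre])

lemma sepMap_cont : Continuous sepMap := continuous_quot_lift _ sepPre_cont

lemma sepPre_inj (a b : Torus2) (t : I) (h : sepPre (a, t) = sepPre (b, t)) : a = b := by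
  simp only [sepPre, Prod.mk.injEq] at h
  obtain ⟨h1, h2, h3⟩ := h
  have e2 : a.2 = b.2 := circ_inj h1
  refine Prod.ext ?_ e2
  by_cases t0 : (t : ℝ) = 0
  · simp only [t0, Complex.ofReal_zero, sub_zero, one_mul, zero_mul, add_zero] at h3
    have := circ_inj h3
    rw [e2] at this
    exact add_right_cancel this
  by_cases t1 : (t : ℝ) = 1
  · simp only [t1, Complex.ofReal_one, sub_self, one_mul, zero_mul, zero_add] at h3
    exact circ_inj h3
  · apply circ_inj
    refine mul_left_cancel₀ (mul_ne_zero ?_ ?_) h2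
    · exact_mod_cast t0
    · rw [sub_ne_zero]; exact_mod_cast Ne.symm t1

lemma mk_inj (a b : Torus2) (t : I) (h : (Quot.mk maRel (a, t) : MABundle) = Quot.mk maRel (b, t)) :
    a = b := sepPre_inj a b t (congrArg sepMap h)

lemma mk_glue (a : Torus2) :
    (Quot.mk maRel (a, 0) : MABundle) = Quot.mk maRel ((a.1 + a.2, a.2), 1) :=
  Quot.sound ⟨rfl, rfl, rfl⟩

lemma coe_I_eq (t t' : I) (h : ((t : ℝ) : UnitAddCircle) = ((t' : ℝ) : UnitAddCircle)) :
    t = t' ∨ (t = 0 ∧ t' = 1) ∨ (t = 1 ∧ t' = 0) := by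
  have h' : ((t - t' : ℝ) : UnitAddCircle) = 0 := by rw [AddCircle.coe_sub, h, sub_self]
  rw [AddCircle.coe_eq_zero_iff] at h'
  obtain ⟨n, hn⟩ := h'
  simp only [zsmul_eq_mul, mul_one] at hn
  have := t.2.1; have := t.2.2; have := t'.2.1; have := t'.2.2
  have n1 : n ≤ 1 := by
    have : (n : ℝ) ≤ 1 := by linarith
    exact_mod_cast this
  have n2 : -1 ≤ n := by
    have : (-1 : ℝ) ≤ n := by linarith
    exact_mod_cast this
  have : n = 0 ∨ n = -1 ∨ n = 1 := by omega
  rcases this with rfl | rfl | rfl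
  · left; ext; push_cast at hn; linarith
  · right; left; push_cast at hn
    constructor <;> ext <;> simp only [Set.Icc.coe_zero, Set.Icc.coe_one] <;> linarith
  · right; right; push_cast at hn
    constructor <;> ext <;> simp only [Set.Icc.coe_zero, Set.Icc.coe_one] <;> linarith

lemma exists_rep (p : MABundle → UnitAddCircle)
    (hp : ∀ (a : Torus2) (t : unitInterval),
      p (Quot.mk maRel (a, t)) = ((t : ℝ) : UnitAddCircle)) (w : MABundle) (t : I)
    (h : p w = ((t : ℝ) : UnitAddCircle)) : ∃ a : Torus2, w = Quot.mk maRel (a, t) := by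
  induction w using Quot.ind with
  | mk z =>
    obtain ⟨a, t'⟩ := z
    rw [hp] at h
    rcases coe_I_eq _ _ h with rfl | ⟨rfl, rfl⟩ | ⟨rfl, rfl⟩
    · exact ⟨a, rfl⟩
    · exact ⟨_, mk_glue a⟩
    · refine ⟨(a.1 - a.2, a.2), ?_⟩
      rw [mk_glue]; simp

lemma ma_t2 (p : MABundle → UnitAddCircle) (hpc : Continuous p)
    (hp : ∀ (a : Torus2) (t : unitInterval),
      p (Quot.mk maRel (a, t)) = ((t : ℝ) : UnitAddCircle)) : T2Space MABundle := by
  refine T2Space.of_injective_continuous (f := fun w => (p w, sepMap w)) ?_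
    (hpc.prodMk sepMap_cont)
  intro w w' h
  simp only [Prod.mk.injEq] at h
  obtain ⟨h1, h2⟩ := h
  induction w using Quot.ind with
  | mk z =>
    obtain ⟨a, t⟩ := z
    rw [hp] at h1
    obtain ⟨b, rfl⟩ := exists_rep p hp w' t h1.symm
    rw [sepPre_inj a b t h2]

lemma exists_fiber_coord (p : MABundle → UnitAddCircle) (hpc : Continuous p)
    (hp : ∀ (a : Torus2) (t : unitInterval),
      p (Quot.mk maRel (a, t)) = ((t : ℝ) : UnitAddCircle))
    {Y : Type*} [TopologicalSpace Y] (q : Y → MABundle) (hq : Continuous q) (ζ : Y → I)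
    (hζ : Continuous ζ) (h : ∀ y, p (q y) = ((ζ y : ℝ) : UnitAddCircle)) :
    ∃ G : Y → Torus2, Continuous G ∧ ∀ y, q y = Quot.mk maRel (G y, ζ y) := by
  have := ma_t2 p hpc hp
  let Φ : Torus2 × I → MABundle × I := fun z => (Quot.mk maRel z, z.2)
  have hΦ : Continuous Φ := continuous_quot_mk.prodMk continuous_snd
  have hΦi : Function.Injective Φ := by
    rintro ⟨a, t⟩ ⟨b, t'⟩ hab
    simp only [Φ, Prod.mk.injEq] at hab
    obtain ⟨h1, rfl⟩ := hab
    rw [mk_inj a b t h1]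
  have emb := hΦ.isClosedEmbedding hΦi
  choose G hG using fun y => exists_rep p hp (q y) (ζ y) (h y)
  refine ⟨G, ?_, hG⟩
  have : Continuous (fun y => (G y, ζ y)) := by
    rw [emb.isInducing.continuous_iff]
    have : Φ ∘ (fun y => (G y, ζ y)) = fun y => (q y, ζ y) := by
      funext y; simp only [Φ, Function.comp, ← hG]
    rw [this]; exact hq.prodMk hζ
  exact continuous_fst.comp this

/-- Lifting a null homotopy in the circle. -/
lemma exists_null_lift {A : Type*} [TopologicalSpace A] (D : I × A → UnitAddCircle)
    (hD : Continuous D) (h0 : ∀ a, D (0, a) = 0) :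
    ∃ E : I × A → ℝ, Continuous E ∧ (∀ z, ((E z : ℝ) : UnitAddCircle) = D z) ∧
      ∀ a, E (0, a) = 0 := by
  have cov := AddCircle.isCoveringMap_coe (p := (1 : ℝ))
  have h0' : ∀ a, (⟨D, hD⟩ : C(I × A, UnitAddCircle)) (0, a) =
      (((ContinuousMap.const _ 0 : C(A, ℝ)) a : ℝ) : UnitAddCircle) := by
    intro a; simpa using h0 a
  refine ⟨cov.liftHomotopy ⟨D, hD⟩ (ContinuousMap.const _ 0) h0', ContinuousMap.continuous _, ?_, ?_⟩
  · intro z; exact congr_fun (cov.liftHomotopy_lifts ⟨D, hD⟩ (ContinuousMap.const _ 0) h0') z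
  · intro a; exact cov.liftHomotopy_zero _ _ h0' a

lemma zero_of_coe_zero (φ : I → ℝ) (hφ : Continuous φ) (h : ∀ x, ((φ x : ℝ) : UnitAddCircle) = 0)
    (h0 : φ 0 = 0) : φ 1 = 0 :=
  (const_of_coe_const 1 φ hφ 0 h 1 0).trans h0

lemma half_smul (r : ℤ) (hr : Even r) : r • ((1 / 2 : ℝ) : UnitAddCircle) = 0 := by
  obtain ⟨k, rfl⟩ := hr
  rw [← AddCircle.coe_zsmul, AddCircle.coe_eq_zero_iff]
  refine ⟨k, ?_⟩
  simp only [zsmul_eq_mul]; push_cast; ring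

lemma even_of_half_smul (r : ℤ) (h : r • ((1 / 2 : ℝ) : UnitAddCircle) = 0) : Even r := by
  rw [← AddCircle.coe_zsmul, AddCircle.coe_eq_zero_iff] at h
  obtain ⟨k, hk⟩ := h
  simp only [zsmul_eq_mul, mul_one] at hk
  refine ⟨k, ?_⟩
  have : (r : ℝ) = k + k := by linarith
  exact_mod_cast this

lemma half_half (x : UnitAddCircle) :
    x + ((1 / 2 : ℝ) : UnitAddCircle) + ((1 / 2 : ℝ) : UnitAddCircle) = x := by
  rw [add_assoc, ← AddCircle.coe_add]
  have : (1 / 2 + 1 / 2 : ℝ) = 1 := by norm_num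
  rw [this, AddCircle.coe_period, add_zero]

end

/-- For the torus bundle `MA` over `S¹` with monodromy `[[1,1],[0,1]]`,
its unique free involution `τ[((x,y),t)] = [((x+1/2,y),t)]` over `S¹`, and the
fiber-preserving map `f[((x,y),t)] = [((rx+sy+ut, ry+vt), t)]`, the homotopy class of `f`
over `S¹` has the Borsuk–Ulam property with respect to `τ` iff `r` is even. -/
theorem stmt19 (r s u v : ℤ)
    (p : MABundle → UnitAddCircle) (hpc : Continuous p)
    (hp : ∀ (a : Torus2) (t : unitInterval),
      p (Quot.mk maRel (a, t)) = ((t : ℝ) : UnitAddCircle))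
    (τ : MABundle → MABundle) (hτc : Continuous τ)
    (hτ : ∀ (a : Torus2) (t : unitInterval), τ (Quot.mk maRel (a, t)) =
      Quot.mk maRel ((a.1 + ((1 / 2 : ℝ) : UnitAddCircle), a.2), t))
    (f : MABundle → MABundle) (hfc : Continuous f)
    (hf : ∀ (a : Torus2) (t : unitInterval), f (Quot.mk maRel (a, t)) =
      Quot.mk maRel ((r • a.1 + s • a.2 + (((u : ℝ) * (t : ℝ) : ℝ) : UnitAddCircle),
        r • a.2 + (((v : ℝ) * (t : ℝ) : ℝ) : UnitAddCircle)), t)) :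
    (∀ g : MABundle → MABundle, Continuous g →
      (∃ H : MABundle × unitInterval → MABundle, Continuous H ∧
        (∀ w, H (w, 0) = f w) ∧ (∀ w, H (w, 1) = g w) ∧
        ∀ w t, p (H (w, t)) = p w) →
      ∃ w : MABundle, g (τ w) = g w) ↔ Even r := by
  constructor
  · intro hall
    obtain ⟨w, hw⟩ := hall f hfc ⟨fun z => f z.1, hfc.comp continuous_fst, fun _ => rfl,
      fun _ => rfl, by
        intro w t
        induction w using Quot.ind with
        | mk z => obtain ⟨a, t⟩ := z; simp only [hf, hp]⟩
    induction w using Quot.ind with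
    | mk z =>
      obtain ⟨a, t⟩ := z
      rw [hτ, hf, hf] at hw
      have := congrArg Prod.fst (mk_inj _ _ _ hw)
      simp only [smul_add] at this
      apply even_of_half_smul
      have h2 := sub_eq_zero.2 this
      rw [← h2]; abel
  · rintro hr g hg ⟨H, hH, H0, H1, Hp⟩
    obtain ⟨K, hK, hKH⟩ := exists_fiber_coord p hpc hp
      (fun y : I × (Torus2 × I) => H (Quot.mk maRel y.2, y.1))
      (hH.comp ((continuous_quot_mk.comp continuous_snd).prodMk continuous_fst))
      (fun y => y.2.2) (by fun_prop) (by
        rintro ⟨ζ, a, t⟩; simp only [Hp, hp])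
    let S : Torus2 → Torus2 := fun a => (a.1 + ((1 / 2 : ℝ) : UnitAddCircle), a.2)
    have hS : Continuous S := by fun_prop
    have hSS : ∀ a, S (S a) = a := fun a => Prod.ext (half_half a.1) rfl
    have K0 : ∀ a t, K (0, a, t) =
        (r • a.1 + s • a.2 + (((u : ℝ) * (t : ℝ) : ℝ) : UnitAddCircle),
        r • a.2 + (((v : ℝ) * (t : ℝ) : ℝ) : UnitAddCircle)) := by
      intro a t
      have := hKH (0, a, t)
      simp only [H0, hf] at this
      exact (mk_inj _ _ _ this).symm
    have Kglue : ∀ ζ a, K (ζ, (a.1 + a.2, a.2), 1) =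
        ((K (ζ, a, 0)).1 + (K (ζ, a, 0)).2, (K (ζ, a, 0)).2) := by
      intro ζ a
      have e1 := hKH (ζ, (a.1 + a.2, a.2), 1)
      have e0 := hKH (ζ, a, 0)
      simp only at e1 e0
      rw [← mk_glue, e0, mk_glue] at e1
      exact (mk_inj _ _ _ e1).symm
    let D : I × (Torus2 × I) → Torus2 := fun z => K (z.1, S z.2.1, z.2.2) - K z
    have hD : Continuous D := by fun_prop
    have D0 : ∀ z, D (0, z) = 0 := by
      rintro ⟨a, t⟩
      simp only [D, K0, S, smul_add, half_smul r hr, add_zero, sub_self]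
    have Dodd : ∀ ζ a t, D (ζ, S a, t) = - D (ζ, a, t) := by
      intro ζ a t
      simp only [D, hSS, neg_sub]
    have Dglue : ∀ ζ a, D (ζ, (a.1 + a.2, a.2), 1) =
        ((D (ζ, a, 0)).1 + (D (ζ, a, 0)).2, (D (ζ, a, 0)).2) := by
      intro ζ a
      have e : S (a.1 + a.2, a.2) = ((S a).1 + (S a).2, (S a).2) := by
        simp only [S, Prod.mk.injEq, and_true]; abel
      simp only [D, e]
      rw [Kglue ζ a, Kglue ζ (S a)]
      refine Prod.ext ?_ ?_
      · simp only [Prod.fst_sub, Prod.snd_sub]; abel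
      · simp only [Prod.snd_sub]
    obtain ⟨E1, hE1, E1D, E10⟩ := exists_null_lift (fun z => (D z).1) (by fun_prop)
      (fun a => by simp [D0])
    obtain ⟨E2, hE2, E2D, E20⟩ := exists_null_lift (fun z => (D z).2) (by fun_prop)
      (fun a => by simp [D0])
    obtain ⟨⟨a, t⟩, z1, z2⟩ := odd_family_vanishes (fun w => E1 (1, w)) (fun w => E2 (1, w))
      (by fun_prop) (by fun_prop)
      (by
        intro a t
        have := zero_of_coe_zero (fun ζ => E1 (ζ, S a, t) + E1 (ζ, a, t)) (by fun_prop)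
          (fun ζ => by rw [AddCircle.coe_add, E1D, E1D, Dodd]; simp) (by simp [E10])
        exact eq_neg_of_add_eq_zero_left this)
      (by
        intro a t
        have := zero_of_coe_zero (fun ζ => E2 (ζ, S a, t) + E2 (ζ, a, t)) (by fun_prop)
          (fun ζ => by rw [AddCircle.coe_add, E2D, E2D, Dodd]; simp) (by simp [E20])
        exact eq_neg_of_add_eq_zero_left this)
      (by
        intro a
        have := zero_of_coe_zero
          (fun ζ => E1 (ζ, (a.1 + a.2, a.2), 1) - (E1 (ζ, a, 0) + E2 (ζ, a, 0))) (by fun_prop)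
          (fun ζ => by
            rw [AddCircle.coe_sub, AddCircle.coe_add, E1D, E1D, E2D, Dglue]; simp)
          (by simp [E10, E20])
        exact sub_eq_zero.1 this)
      (by
        intro a
        have := zero_of_coe_zero
          (fun ζ => E2 (ζ, (a.1 + a.2, a.2), 1) - E2 (ζ, a, 0)) (by fun_prop)
          (fun ζ => by rw [AddCircle.coe_sub, E2D, E2D, Dglue]; simp)
          (by simp [E20])
        exact sub_eq_zero.1 this)
    have d1 := E1D (1, a, t)
    have d2 := E2D (1, a, t)
    rw [z1, AddCircle.coe_zero] at d1
    rw [z2, AddCircle.coe_zero] at d2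
    have d : K (1, S a, t) = K (1, a, t) := sub_eq_zero.1 (Prod.ext d1.symm d2.symm)
    refine ⟨Quot.mk maRel (a, t), ?_⟩
    rw [hτ, ← H1, ← H1]
    have k1 := hKH (1, S a, t)
    have k2 := hKH (1, a, t)
    rw [k2, ← d]
    exact k1
end
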